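/- Let f : ℝ/ℤ → [0,1] be a Borel function such that either f ≤ 1/2 almost everywhere or f ≥ 1/2 almost everywhere, and let q ≥ 2 be an integer. Then the limit lim_{N→∞} ( log S_N^{(q)}(f) ) / ( −(q−1)·N·log 2 ) exists as a real number (and equals the infimum over N ≥ 1 of ( log S_N^{(q)}(f) ) / ( −(q−1)·N·log 2 ) up to sign convention, by submultiplicativity and Fekete's lemma); equivalently, the L^q-dimension dim_q μ_f^+ of the one-sided stationary determinantal measure exists. -/

import Mathlib

open MeasureTheory Matrix Filter

/-- The `n`-th Fourier coefficient of a function on the circle `ℝ/ℤ`. -/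
noncomputable def fhat (f : AddCircle (1:ℝ) → ℝ) (n : ℤ) : ℂ :=
  fourierCoeff (fun t => (f t : ℂ)) n

/-- A boolean seen as the complex number `0` or `1`. -/
def bc (b : Bool) : ℂ := if b then 1 else 0

/-- The `N×N` Toeplitz matrix `T_N(f) = (f̂(i-j))_{1 ≤ i,j ≤ N}`. -/
noncomputable def Tmat (f : AddCircle (1:ℝ) → ℝ) (N : ℕ) : Matrix (Fin N) (Fin N) ℂ :=
  Matrix.of fun i j => fhat f (((i : ℕ) : ℤ) - ((j : ℕ) : ℤ))

/-- The cylinder weight `μ_f^+([ε]) = det(D_N(2ε-1)·T_N(f) + D_N(1-ε))`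
(a real number, taken as the real part of the complex determinant). -/
noncomputable def cylWeight (f : AddCircle (1:ℝ) → ℝ) {N : ℕ} (ε : Fin N → Bool) : ℝ :=
  ((Matrix.diagonal (fun i => 2 * bc (ε i) - 1) * Tmat f N +
      Matrix.diagonal (fun i => 1 - bc (ε i))).det).re

/-- `S_N^{(q)}(f) = Σ_{ε ∈ {0,1}^N} det(D_N(2ε-1)·T_N(f) + D_N(1-ε))^q`. -/
noncomputable def Sq (f : AddCircle (1:ℝ) → ℝ) (q N : ℕ) : ℝ :=
  ∑ ε : Fin N → Bool, (cylWeight f ε) ^ q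

/-!
With signs `s = 2ε - 1`, the weight of the cylinder `ε` is `2⁻ᴺ det(1 + diag(s) (2T_N(f) - 1))`.
Replacing `ε` by `1 - ε` shows that `S_N` does not see the sign of `2T_N(f) - 1`, which is the
Toeplitz matrix of `2f - 1`; so we may take this symbol to be nonnegative and the matrix to be
positive semidefinite. Expanding the determinant in principal minors `∏_{i ∈ F} s_i · det B_F` and
summing its `q`-th power over all sign vectors leaves a combination of products of principal minors
whose coefficients are nonnegative and multiplicative over a splitting of `{1, …, m + n}` into two
intervals. Fischer's inequality makes each principal minor submultiplicative over that splitting,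
whence `S_{m+n} ≤ S_m S_n`; keeping only the empty minors bounds `S_N` below by `2^{(1-q)N}`, and
Fekete's lemma applies.
-/

section PrincipalMinors

variable {ι R : Type*} [DecidableEq ι] [CommRing R]

/-- The principal minor of `B` with rows and columns in `S`; the empty minor is `1`. -/
def principalMinor (B : Matrix ι ι R) (S : Finset ι) : R :=
  (B.submatrix ((↑) : S → ι) (↑)).det

lemma principalMinor_empty (B : Matrix ι ι R) : principalMinor B ∅ = 1 :=
  det_isEmpty

lemma principalMinor_diagonal_mul [Fintype ι] (d : ι → R) (B : Matrix ι ι R) (S : Finset ι) :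
    principalMinor (diagonal d * B) S = (∏ i ∈ S, d i) * principalMinor B S := by
  have hsub : (diagonal d * B).submatrix ((↑) : S → ι) (↑) =
      diagonal (fun i : S => d i) * B.submatrix (↑) (↑) := by
    ext i j
    simp only [submatrix_apply, diagonal_mul]
  rw [principalMinor, hsub, det_mul, det_diagonal, Finset.prod_coe_sort, principalMinor]

lemma det_one_add_eq_sum_principalMinor [Fintype ι] (B : Matrix ι ι R) :
    (1 + B).det = ∑ S : Finset ι, principalMinor B S := by
  calc (1 + B).det
      = ∑ S : Finset ι, (Matrix.of (S.piecewise B.row (1 : Matrix ι ι R).row)).det := by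
        rw [add_comm]
        exact detRowAlternating.map_add_univ B.row (1 : Matrix ι ι R).row
    _ = ∑ S : Finset ι, principalMinor B S := by
        simp only [det_piecewise_one_eq_submatrix_det, principalMinor]

end PrincipalMinors

section Fischer

open scoped ComplexOrder

variable {ι κ 𝕜 : Type*} [DecidableEq ι] [DecidableEq κ] [RCLike 𝕜]

lemma principalMinor_nonneg {B : Matrix ι ι 𝕜} (hB : B.PosSemidef) (S : Finset ι) :
    0 ≤ principalMinor B S :=
  (hB.submatrix _).det_nonneg

lemma one_le_det_one_add [Fintype ι] {B : Matrix ι ι 𝕜} (hB : B.PosSemidef) :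
    1 ≤ (1 + B).det := by
  rw [det_one_add_eq_sum_principalMinor, ← principalMinor_empty B]
  exact Finset.single_le_sum (fun S _ => principalMinor_nonneg hB S) (Finset.mem_univ ∅)

open scoped MatrixOrder in
lemma det_le_det_add [Fintype ι] {A B : Matrix ι ι 𝕜} (hA : A.PosSemidef) (hB : B.PosSemidef) :
    A.det ≤ (A + B).det := by
  by_cases hdet : A.det = 0
  · rw [hdet]
    exact (hA.add hB).det_nonneg
  obtain ⟨Y, rfl⟩ := CStarAlgebra.nonneg_iff_eq_star_mul_self.mp hB.nonneg
  rw [det_add_mul _ _ (isUnit_iff_ne_zero.mpr hdet)]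
  exact le_mul_of_one_le_right hA.det_nonneg
    (one_le_det_one_add (hA.inv.mul_mul_conjTranspose_same Y))

/-- **Fischer's inequality**. -/
lemma det_le_det_toBlocks₁₁_mul_det_toBlocks₂₂ [Fintype ι] [Fintype κ]
    {M : Matrix (ι ⊕ κ) (ι ⊕ κ) 𝕜} (hM : M.PosSemidef) :
    M.det ≤ M.toBlocks₁₁.det * M.toBlocks₂₂.det := by
  have hA : M.toBlocks₁₁.PosSemidef := hM.submatrix Sum.inl
  have hD : M.toBlocks₂₂.PosSemidef := hM.submatrix Sum.inr
  by_cases hdet : M.det = 0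
  · rw [hdet]
    exact mul_nonneg hA.det_nonneg hD.det_nonneg
  have hApos : M.toBlocks₁₁.PosDef :=
    (hM.posDef_iff_det_ne_zero.mpr hdet).submatrix Sum.inl_injective
  have hC : M.toBlocks₁₂ᴴ = M.toBlocks₂₁ := by
    ext i j
    exact hM.1.apply (Sum.inr i) (Sum.inl j)
  let := hApos.isUnit.invertible
  have hSchur : (M.toBlocks₂₂ - M.toBlocks₁₂ᴴ * M.toBlocks₁₁⁻¹ * M.toBlocks₁₂).PosSemidef := by
    rw [← PosDef.fromBlocks₁₁ _ _ hApos, hC, fromBlocks_toBlocks]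
    exact hM
  calc M.det = M.toBlocks₁₁.det *
        (M.toBlocks₂₂ - M.toBlocks₁₂ᴴ * M.toBlocks₁₁⁻¹ * M.toBlocks₁₂).det := by
        rw [hC, ← invOf_eq_nonsing_inv, ← det_fromBlocks₁₁, fromBlocks_toBlocks]
    _ ≤ M.toBlocks₁₁.det * M.toBlocks₂₂.det := by
        refine mul_le_mul_of_nonneg_left ?_ hA.det_nonneg
        simpa only [sub_add_cancel] using
          det_le_det_add hSchur (hA.inv.conjTranspose_mul_mul_same M.toBlocks₁₂)

lemma principalMinor_disjSum_le {B : Matrix (ι ⊕ κ) (ι ⊕ κ) 𝕜} (hB : B.PosSemidef)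
    (S : Finset ι) (T : Finset κ) :
    principalMinor B (S.disjSum T) ≤
      principalMinor B.toBlocks₁₁ S * principalMinor B.toBlocks₂₂ T := by
  let e : S ⊕ T ≃ S.disjSum T :=
    ((Equiv.subtypeSum (p := (· ∈ S.disjSum T))).trans (Equiv.sumCongr
      (Equiv.subtypeEquivRight fun _ => Finset.inl_mem_disjSum)
      (Equiv.subtypeEquivRight fun _ => Finset.inr_mem_disjSum))).symm
  rw [principalMinor, ← det_submatrix_equiv_self e]
  exact det_le_det_toBlocks₁₁_mul_det_toBlocks₂₂ ((hB.submatrix _).submatrix e)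

end Fischer

section SignMoment

variable {ι κ R : Type*} [CommRing R]

/-- The sign `±1` attached to a bit, `2ε - 1` in terms of `ε ∈ {0,1}`. -/
def boolSign (R : Type*) [Ring R] (b : Bool) : R := if b then 1 else -1

lemma boolSign_not (b : Bool) : boolSign R (!b) = -boolSign R b := by
  cases b <;> simp [boolSign]

lemma sum_boolSign_pow (n : ℕ) :
    ∑ b, boolSign R b ^ n = ((if Even n then 2 else 0 : ℕ) : R) := by
  rcases Nat.even_or_odd n with hn | hn
  · simp [boolSign, hn, hn.neg_one_pow, one_add_one_eq_two]
  · simp [boolSign, Nat.not_even_iff_odd.mpr hn, hn.neg_one_pow]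

variable [Fintype ι] [DecidableEq ι] [Fintype κ] [DecidableEq κ]

/-- The unnormalized `q`-th moment `∑ₛ det(1 + diag(s) B)^q` over all sign vectors `s`. For
`B = 2T - 1` it is, up to a power of `2`, the sum of the `q`-th powers of the cylinder weights of
the determinantal measure with kernel `T`. -/
def signMoment (B : Matrix ι ι R) (q : ℕ) : R :=
  ∑ ε : ι → Bool, (1 + diagonal (fun i => boolSign R (ε i)) * B).det ^ q

lemma signMoment_neg (B : Matrix ι ι R) (q : ℕ) : signMoment (-B) q = signMoment B q := by
  refine Fintype.sum_equiv (Equiv.arrowCongr (Equiv.refl ι) Equiv.boolNot) _ _ fun ε => ?_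
  have hsign : diagonal (fun i => boolSign R (!ε i)) = -diagonal (fun i => boolSign R (ε i)) := by
    simp only [boolSign_not, diagonal_neg]
  change _ = (1 + diagonal (fun i => boolSign R (!ε i)) * B).det ^ q
  rw [hsign, neg_mul_comm]

lemma signMoment_submatrix_equiv (B : Matrix ι ι R) (e : κ ≃ ι) (q : ℕ) :
    signMoment (B.submatrix e e) q = signMoment B q := by
  refine Fintype.sum_equiv (Equiv.arrowCongr e (Equiv.refl Bool)) _ _ fun ε => ?_
  rw [← det_submatrix_equiv_self e (1 + _)]
  congr 2
  ext i j
  simp [one_apply, diagonal_mul]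

/-- The number of sign vectors `s`, each counted with the sign `∏ₖ ∏_{i ∈ F k} s i`. The sum over
each coordinate factors out and equals `2` or `0` according to parity, which is taken here as the
definition. -/
def parityWeight {q : ℕ} (F : Fin q → Finset ι) : ℕ :=
  ∏ i, if Even (Finset.card {k | i ∈ F k}) then 2 else 0

lemma sum_prod_boolSign {q : ℕ} (F : Fin q → Finset ι) :
    ∑ ε : ι → Bool, ∏ k, ∏ i ∈ F k, boolSign R (ε i) = parityWeight F := by
  calc ∑ ε : ι → Bool, ∏ k, ∏ i ∈ F k, boolSign R (ε i)
      = ∑ ε : ι → Bool, ∏ i, boolSign R (ε i) ^ Finset.card {k | i ∈ F k} := by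
        refine Finset.sum_congr rfl fun ε _ => ?_
        rw [Finset.prod_comm' (t' := Finset.univ) (s' := fun i => {k | i ∈ F k}) (by simp)]
        simp only [Finset.prod_const]
    _ = ∏ i, ∑ b, boolSign R b ^ Finset.card {k | i ∈ F k} :=
        (Fintype.prod_sum fun i b => boolSign R b ^ Finset.card {k | i ∈ F k}).symm
    _ = parityWeight F := by
        simp only [sum_boolSign_pow, parityWeight, Nat.cast_prod]

lemma signMoment_eq_sum_parityWeight (B : Matrix ι ι R) (q : ℕ) :
    signMoment B q =
      ∑ F : Fin q → Finset ι, (parityWeight F : R) * ∏ k, principalMinor B (F k) := by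
  simp only [signMoment, det_one_add_eq_sum_principalMinor, principalMinor_diagonal_mul,
    Fintype.sum_pow, Finset.prod_mul_distrib]
  rw [Finset.sum_comm]
  simp only [← Finset.sum_mul, sum_prod_boolSign]

lemma parityWeight_empty (q : ℕ) :
    parityWeight (fun _ : Fin q => (∅ : Finset ι)) = 2 ^ Fintype.card ι := by
  simp [parityWeight]

lemma parityWeight_disjSum {q : ℕ} (F : Fin q → Finset ι) (G : Fin q → Finset κ) :
    parityWeight (fun k => (F k).disjSum (G k)) = parityWeight F * parityWeight G := by
  simp only [parityWeight, Fintype.prod_sum_type, Finset.inl_mem_disjSum, Finset.inr_mem_disjSum]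

end SignMoment

section Positivity

open scoped ComplexOrder

variable {ι κ 𝕜 : Type*} [Fintype ι] [DecidableEq ι] [Fintype κ] [DecidableEq κ] [RCLike 𝕜]

lemma isSelfAdjoint_det_one_add_diagonal_boolSign_mul {B : Matrix ι ι 𝕜} (hB : B.IsHermitian)
    (ε : ι → Bool) :
    IsSelfAdjoint (1 + diagonal (fun i => boolSign 𝕜 (ε i)) * B).det := by
  have hD : (diagonal fun i => boolSign 𝕜 (ε i))ᴴ = diagonal fun i => boolSign 𝕜 (ε i) := by
    rw [diagonal_conjTranspose]
    congr 1
    ext i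
    cases h : ε i <;> simp [boolSign, h]
  rw [IsSelfAdjoint, ← det_conjTranspose, conjTranspose_add, conjTranspose_one,
    conjTranspose_mul, hB.eq, hD, det_one_add_mul_comm]

lemma two_pow_card_le_signMoment {B : Matrix ι ι 𝕜} (hB : B.PosSemidef) (q : ℕ) :
    2 ^ Fintype.card ι ≤ signMoment B q := by
  have hnonneg (F : Fin q → Finset ι) :
      0 ≤ (parityWeight F : 𝕜) * ∏ k, principalMinor B (F k) :=
    mul_nonneg (Nat.cast_nonneg _) (Finset.prod_nonneg fun k _ => principalMinor_nonneg hB _)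
  rw [signMoment_eq_sum_parityWeight]
  simpa only [parityWeight_empty, principalMinor_empty, Finset.prod_const_one, mul_one,
    Nat.cast_pow, Nat.cast_ofNat] using
      Finset.single_le_sum (fun F _ => hnonneg F) (Finset.mem_univ fun _ => ∅)

lemma signMoment_le_toBlocks₁₁_mul_toBlocks₂₂ {B : Matrix (ι ⊕ κ) (ι ⊕ κ) 𝕜}
    (hB : B.PosSemidef) (q : ℕ) :
    signMoment B q ≤ signMoment B.toBlocks₁₁ q * signMoment B.toBlocks₂₂ q := by
  let e : (Fin q → Finset ι) × (Fin q → Finset κ) ≃ (Fin q → Finset (ι ⊕ κ)) :=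
    (Equiv.arrowProdEquivProdArrow (Fin q) _ _).symm.trans
      (Equiv.arrowCongr (Equiv.refl _) Finset.sumEquiv.symm.toEquiv)
  have he (P : (Fin q → Finset ι) × (Fin q → Finset κ)) :
      e P = fun k => (P.1 k).disjSum (P.2 k) := rfl
  simp only [signMoment_eq_sum_parityWeight]
  rw [Finset.sum_mul_sum, ← Fintype.sum_prod_type', ← e.sum_comp]
  refine Finset.sum_le_sum fun P _ => ?_
  rw [he, parityWeight_disjSum, Nat.cast_mul, mul_mul_mul_comm, ← Finset.prod_mul_distrib]
  gcongr with k
  · exact fun k _ => principalMinor_nonneg hB _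
  · exact principalMinor_disjSum_le hB _ _

end Positivity

section Toeplitz

open scoped ComplexOrder

lemma posSemidef_integral {α n 𝕜 : Type*} [MeasurableSpace α] {μ : Measure α} [Finite n]
    [RCLike 𝕜] {A : α → Matrix n n 𝕜} (hint : ∀ i j, Integrable (fun t => A t i j) μ)
    (hA : ∀ᵐ t ∂μ, (A t).PosSemidef) : (Matrix.of fun i j => ∫ t, A t i j ∂μ).PosSemidef := by
  cases nonempty_fintype n
  refine .of_dotProduct_mulVec_nonneg ?_ fun x => ?_
  · ext i j
    rw [conjTranspose_apply, of_apply, of_apply, ← starRingEnd_apply, ← integral_conj]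
    refine integral_congr_ae ?_
    filter_upwards [hA] with t ht using ht.1.apply i j
  · have hquad : star x ⬝ᵥ ((Matrix.of fun i j => ∫ t, A t i j ∂μ) *ᵥ x) =
        ∫ t, star x ⬝ᵥ (A t *ᵥ x) ∂μ := by
      simp only [dotProduct, mulVec, of_apply]
      rw [integral_finsetSum _ fun i _ =>
        (integrable_finsetSum _ fun j _ => (hint i j).mul_const _).const_mul _]
      refine Finset.sum_congr rfl fun i _ => ?_
      rw [integral_const_mul, integral_finsetSum _ fun j _ => (hint i j).mul_const _]
      simp only [integral_mul_const]
    rw [hquad]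
    refine integral_nonneg_of_ae ?_
    filter_upwards [hA] with t ht using ht.dotProduct_mulVec_nonneg x

lemma posSemidef_Tmat {g : AddCircle (1 : ℝ) → ℝ} (hg : Integrable g AddCircle.haarAddCircle)
    (hg0 : 0 ≤ᵐ[AddCircle.haarAddCircle] g) (N : ℕ) : (Tmat g N).PosSemidef := by
  let e (t : AddCircle (1 : ℝ)) (i : Fin N) : ℂ := fourier (i : ℤ) t
  have hentry (t : AddCircle (1 : ℝ)) (i j : Fin N) :
      ((g t : ℂ) • vecMulVec (star (e t)) (e t)) i j = fourier (-((i : ℤ) - j)) t • (g t : ℂ) := by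
    rw [Matrix.smul_apply, vecMulVec_apply, Pi.star_apply, neg_sub, sub_eq_neg_add, fourier_add,
      fourier_neg, smul_eq_mul, smul_eq_mul, mul_comm, Complex.star_def]
  have hT : Tmat g N = Matrix.of fun i j =>
      ∫ t, ((g t : ℂ) • vecMulVec (star (e t)) (e t)) i j ∂AddCircle.haarAddCircle := by
    simp only [hentry]
    rfl
  rw [hT]
  refine posSemidef_integral (fun i j => ?_) ?_
  · simp only [hentry]
    exact (hg.ofReal (𝕜 := ℂ)).fourier_smul _
  · filter_upwards [hg0] with t ht
    exact (posSemidef_vecMulVec_star_self (e t)).smul (Complex.zero_le_real.mpr ht)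

lemma isHermitian_Tmat (f : AddCircle (1 : ℝ) → ℝ) (N : ℕ) : (Tmat f N).IsHermitian := by
  ext i j
  simp only [conjTranspose_apply, Tmat, of_apply, fhat, fourierCoeff, ← starRingEnd_apply]
  rw [← integral_conj]
  congr 1 with t
  rw [smul_eq_mul, map_mul, ← fourier_neg, neg_neg, neg_sub, Complex.conj_ofReal, smul_eq_mul]

lemma fhat_mul_add_const {f : AddCircle (1 : ℝ) → ℝ} (hf : Integrable f AddCircle.haarAddCircle)
    (a b : ℝ) (n : ℤ) :
    fhat (fun t => a * f t + b) n = a * fhat f n + b * (if n = 0 then 1 else 0) := by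
  have hsplit : (fun t => ((a * f t + b : ℝ) : ℂ)) =
      (fun t => (a : ℂ) * (f t : ℂ)) + fun _ => (b : ℂ) := by
    ext t
    simp
  have hconst : fourierCoeff (T := 1) (fun _ => (b : ℂ)) n = b * (if n = 0 then 1 else 0) := by
    simpa [fourierCoeff_fourier, Pi.single_apply] using
      fourierCoeff.const_mul (T := 1) (fourier 0) (b : ℂ) n
  have hfc : Integrable (fun t => (f t : ℂ)) AddCircle.haarAddCircle := hf.ofReal
  rw [fhat, hsplit, fourierCoeff.add (hfc.const_mul _) (integrable_const _), Pi.add_apply,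
    fourierCoeff.const_mul, hconst, fhat]

lemma Tmat_mul_add_const {f : AddCircle (1 : ℝ) → ℝ} (hf : Integrable f AddCircle.haarAddCircle)
    (a b : ℝ) (N : ℕ) :
    Tmat (fun t => a * f t + b) N = (a : ℂ) • Tmat f N + (b : ℂ) • 1 := by
  ext i j
  simp only [Tmat, of_apply, fhat_mul_add_const hf, Matrix.add_apply, Matrix.smul_apply, one_apply,
    sub_eq_zero, Nat.cast_inj, Fin.ext_iff, smul_eq_mul]

lemma two_pow_le_signMoment_Tmat {g : AddCircle (1 : ℝ) → ℝ}
    (hg : Integrable g AddCircle.haarAddCircle) (hg0 : 0 ≤ᵐ[AddCircle.haarAddCircle] g)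
    (q N : ℕ) : 2 ^ N ≤ signMoment (Tmat g N) q := by
  simpa only [Fintype.card_fin] using two_pow_card_le_signMoment (posSemidef_Tmat hg hg0 N) q

lemma signMoment_Tmat_add_le {g : AddCircle (1 : ℝ) → ℝ}
    (hg : Integrable g AddCircle.haarAddCircle) (hg0 : 0 ≤ᵐ[AddCircle.haarAddCircle] g)
    (q m n : ℕ) :
    signMoment (Tmat g (m + n)) q ≤ signMoment (Tmat g m) q * signMoment (Tmat g n) q := by
  have hm : ((Tmat g (m + n)).submatrix finSumFinEquiv finSumFinEquiv).toBlocks₁₁ = Tmat g m := by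
    ext i j
    simp [toBlocks₁₁, Tmat]
  have hn : ((Tmat g (m + n)).submatrix finSumFinEquiv finSumFinEquiv).toBlocks₂₂ = Tmat g n := by
    ext i j
    simp [toBlocks₂₂, Tmat]
  rw [← signMoment_submatrix_equiv _ finSumFinEquiv, ← hm, ← hn]
  exact signMoment_le_toBlocks₁₁_mul_toBlocks₂₂ ((posSemidef_Tmat hg hg0 _).submatrix _) q

end Toeplitz

section CylinderWeights

lemma ofReal_cylWeight (f : AddCircle (1 : ℝ) → ℝ) {N : ℕ} (ε : Fin N → Bool) :
    (cylWeight f ε : ℂ) = (1 / 2) ^ N *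
      (1 + diagonal (fun i => boolSign ℂ (ε i)) * (2 * Tmat f N - 1)).det := by
  have hB : (2 * Tmat f N - 1).IsHermitian := by
    rw [two_mul]
    exact ((isHermitian_Tmat f N).add (isHermitian_Tmat f N)).sub isHermitian_one
  have hreal : IsSelfAdjoint ((1 / 2 : ℂ) ^ N *
      (1 + diagonal (fun i => boolSign ℂ (ε i)) * (2 * Tmat f N - 1)).det) :=
    .mul (.pow (by simp [IsSelfAdjoint]) N) (isSelfAdjoint_det_one_add_diagonal_boolSign_mul hB ε)
  have hsign (b : Bool) : 2 * bc b - 1 = boolSign ℂ b := by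
    cases b <;> norm_num [bc, boolSign]
  have hcompl (b : Bool) : 1 - bc b = (1 / 2) * (1 - boolSign ℂ b) := by
    cases b <;> norm_num [bc, boolSign]
  have hmatrix :
      diagonal (fun i => 2 * bc (ε i) - 1) * Tmat f N + diagonal (fun i => 1 - bc (ε i)) =
        (1 / 2 : ℂ) • (1 + diagonal (fun i => boolSign ℂ (ε i)) * (2 * Tmat f N - 1)) := by
    simp only [hsign, hcompl]
    ext i j
    simp only [two_mul, Matrix.add_apply, Matrix.sub_apply, Matrix.smul_apply, diagonal_mul,
      diagonal_apply, one_apply, smul_eq_mul]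
    split_ifs <;> ring
  rw [cylWeight, hmatrix, det_smul, Fintype.card_fin]
  exact Complex.conj_eq_iff_re.mp hreal

lemma ofReal_Sq (f : AddCircle (1 : ℝ) → ℝ) (q N : ℕ) :
    (Sq f q N : ℂ) = ((1 / 2) ^ q) ^ N * signMoment (2 * Tmat f N - 1) q := by
  simp only [Sq, Complex.ofReal_sum, Complex.ofReal_pow, ofReal_cylWeight, mul_pow, signMoment,
    Finset.mul_sum]
  simp only [← pow_mul, mul_comm]

lemma exists_nonneg_symbol {f : AddCircle (1 : ℝ) → ℝ} (hf : Integrable f AddCircle.haarAddCircle)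
    (hhalf : (∀ᵐ t ∂AddCircle.haarAddCircle, f t ≤ 1 / 2) ∨
      ∀ᵐ t ∂AddCircle.haarAddCircle, 1 / 2 ≤ f t) :
    ∃ g : AddCircle (1 : ℝ) → ℝ, Integrable g AddCircle.haarAddCircle ∧
      0 ≤ᵐ[AddCircle.haarAddCircle] g ∧
      ∀ q N, (Sq f q N : ℂ) = ((1 / 2) ^ q) ^ N * signMoment (Tmat g N) q := by
  have hint (a b : ℝ) : Integrable (fun t => a * f t + b) AddCircle.haarAddCircle :=
    (hf.const_mul a).add (integrable_const b)
  rcases hhalf with hle | hge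
  · refine ⟨fun t => -2 * f t + 1, hint _ _, ?_, fun q N => ?_⟩
    · filter_upwards [hle] with t ht
      simp only [Pi.zero_apply]
      linarith
    · have hT : Tmat (fun t => -2 * f t + 1) N = -(2 * Tmat f N - 1) := by
        rw [Tmat_mul_add_const hf]
        push_cast
        rw [neg_smul, two_smul, one_smul, two_mul]
        abel
      rw [ofReal_Sq, hT, signMoment_neg]
  · refine ⟨fun t => 2 * f t + -1, hint _ _, ?_, fun q N => ?_⟩
    · filter_upwards [hge] with t ht
      simp only [Pi.zero_apply]
      linarith
    · have hT : Tmat (fun t => 2 * f t + -1) N = 2 * Tmat f N - 1 := by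
        rw [Tmat_mul_add_const hf]
        push_cast
        rw [neg_smul, two_smul, one_smul, two_mul, sub_eq_add_neg]
      rw [ofReal_Sq, hT]

end CylinderWeights

section Limit

open scoped ComplexOrder

lemma tendsto_log_div_of_submultiplicative {u : ℕ → ℝ} {r : ℝ} (hr : 0 < r)
    (hlower : ∀ n, r ^ n ≤ u n) (hmul : ∀ m n, u (m + n) ≤ u m * u n) :
    Tendsto (fun n : ℕ => Real.log (u n) / n) atTop
      (nhds (sInf ((fun n : ℕ => Real.log (u n) / n) '' Set.Ici 1))) := by
  have hpos (n : ℕ) : 0 < u n := (pow_pos hr n).trans_le (hlower n)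
  have hsub : Subadditive fun n => Real.log (u n) := fun m n => by
    rw [← Real.log_mul (hpos m).ne' (hpos n).ne']
    exact Real.log_le_log (hpos _) (hmul m n)
  have hbdd : BddBelow (Set.range fun n : ℕ => Real.log (u n) / n) := by
    refine ⟨min 0 (Real.log r), ?_⟩
    rintro _ ⟨n, rfl⟩
    rcases n.eq_zero_or_pos with rfl | hn
    · simp
    · refine (min_le_right _ _).trans ((le_div_iff₀ (Nat.cast_pos.mpr hn)).mpr ?_)
      rw [mul_comm, ← Real.log_pow]
      exact Real.log_le_log (pow_pos hr n) (hlower n)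
  simpa only [Subadditive.lim] using hsub.tendsto_lim hbdd

theorem Lq_dimension_exists_general {f : AddCircle (1 : ℝ) → ℝ} (hf : Integrable f)
    (hhalf : (∀ᵐ t, f t ≤ 1 / 2) ∨ ∀ᵐ t, 1 / 2 ≤ f t) (q : ℕ) :
    Tendsto (fun N : ℕ => Real.log (Sq f q N) / N) atTop
      (nhds (sInf ((fun N : ℕ => Real.log (Sq f q N) / N) '' Set.Ici 1))) := by
  have hvol : (volume : Measure (AddCircle (1 : ℝ))) = AddCircle.haarAddCircle := by
    rw [AddCircle.volume_eq_smul_haarAddCircle, ENNReal.ofReal_one, one_smul]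
  rw [hvol] at hf hhalf
  obtain ⟨g, hg, hg0, hSq⟩ := exists_nonneg_symbol hf hhalf
  have hscale (n : ℕ) : (0 : ℂ) ≤ ((1 / 2) ^ q) ^ n := by positivity
  refine tendsto_log_div_of_submultiplicative (r := (1 / 2) ^ q * 2) (by positivity)
    (fun N => Complex.real_le_real.mp ?_) (fun m n => Complex.real_le_real.mp ?_)
  · push_cast
    rw [hSq, mul_pow]
    exact mul_le_mul_of_nonneg_left (two_pow_le_signMoment_Tmat hg hg0 q N) (hscale N)
  · push_cast
    rw [hSq, hSq, hSq, pow_add, mul_mul_mul_comm, ← pow_add]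
    exact mul_le_mul_of_nonneg_left (signMoment_Tmat_add_le hg hg0 q m n) (hscale (m + n))

end Limit

/-- If `f ≤ 1/2` a.e. or `f ≥ 1/2` a.e., then the `L^q`-dimension of `μ_f^+` exists:
the limit of `log S_N^{(q)}(f) / (-(q-1)·N·log 2)` exists as a real number. -/
theorem Lq_dimension_exists
    (f : AddCircle (1:ℝ) → ℝ) (hmeas : Measurable f)
    (h0 : ∀ t, 0 ≤ f t) (h1 : ∀ t, f t ≤ 1)
    (hhalf : (∀ᵐ t : AddCircle (1:ℝ), f t ≤ 1 / 2) ∨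
      (∀ᵐ t : AddCircle (1:ℝ), 1 / 2 ≤ f t))
    (q : ℕ) (hq : 2 ≤ q) :
    ∃ L : ℝ, Tendsto
      (fun N : ℕ => Real.log (Sq f q N) / (-(((q : ℝ) - 1)) * (N : ℝ) * Real.log 2))
      atTop (nhds L) := by
  have hf : Integrable f :=
    .of_bound hmeas.aestronglyMeasurable 1 <|
      .of_forall fun t => by simpa [abs_of_nonneg (h0 t)] using h1 t
  exact ⟨_, ((Lq_dimension_exists_general hf hhalf q).div_const (-((q : ℝ) - 1) * Real.log 2)).congr
    fun N => by rw [div_div]; ring_nf⟩
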